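/- Fix an integer N ≥ 1 and let γ̄ ∈ (1, 2) be a real number satisfying 2N·γ̄ = −1 + (1 − γ̄)^{−2N}. Then: (i) for every L > 0, every differentiable f : E → ℝ on a real inner product space with f convex and x ↦ (L/2)‖x‖² − f(x) convex (f ∈ F_{0,L}) with f_* := inf f > −∞, gradient descent with constant stepsize γ = γ̄/L satisfies (1/(2L))‖∇f(x_N)‖² ≤ (f(x_0) − f_*)/(1 + 2N·γ̄); and (ii) for every t ∈ (0,2) with t ≠ 1, 1 + t·min{ 2N , (−1 + (1−t)^{−2N})/t } ≤ 1 + 2N·γ̄, i.e. the constant stepsize γ̄ maximizes the denominator of the worst-case bound of the convex rate over all constant stepsizes. -/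

import Mathlib

/-!
Rescale to `L = 1`. A sequence of nonnegative weights that vanishes at `0` and at `N` makes a
discrete Lyapunov function start at `f (x 0)` and end at `f (x N) + N * γ * ‖∇f (x N)‖ ^ 2`. One
step of gradient descent decreases it by a nonnegative combination of the slacks in the
interpolation inequalities of smooth convex functions between iterates that are one or two steps
apart. The weights are proportional to `1 + 2nγ - (1 - γ) ^ (-2n)`, a concave function of `n`, so
the equation for `γ` is exactly what makes the last weight vanish and all earlier ones nonnegative.
The gradient step at `x N` decreases `f` by another `‖∇f (x N)‖ ^ 2 / 2`, which turns `N * γ` into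
the rate `(1 + 2Nγ) / 2`. Optimality of `γ` holds because the first term of the minimum, times `t`,
increases with `t`, the second decreases for `t > 1`, and the two agree at `γ`.
-/

open scoped RealInnerProductSpace

theorem norm_smul_sq {E : Type*} [SeminormedAddCommGroup E] [NormedSpace ℝ E] (r : ℝ) (v : E) :
    ‖r • v‖ ^ 2 = r ^ 2 * ‖v‖ ^ 2 := by
  rw [norm_smul, mul_pow, Real.norm_eq_abs, sq_abs]

section SmoothConvex

theorem add_fderiv_apply_sub_le_of_convexOn {E : Type*} [NormedAddCommGroup E] [NormedSpace ℝ E]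
    {s : Set E} {f : E → ℝ} {f' : StrongDual ℝ E} {x y : E} (hf : ConvexOn ℝ s f)
    (hx : x ∈ s) (hy : y ∈ s) (hf' : HasFDerivAt f f' x) : f x + f' (y - x) ≤ f y := by
  have hline : ConvexOn ℝ (AffineMap.lineMap x y ⁻¹' s) (f ∘ AffineMap.lineMap (k := ℝ) x y) :=
    hf.comp_affineMap _
  have hderiv : HasDerivAt (f ∘ AffineMap.lineMap (k := ℝ) x y) (f' (y - x)) 0 :=
    HasFDerivAt.comp_hasDerivAt 0 (by simpa using hf') AffineMap.hasDerivAt_lineMap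
  have hslope := hline.le_slope_of_hasDerivAt (by simpa using hx) (by simpa using hy)
    one_pos hderiv
  simp only [slope_def_field, Function.comp_apply, AffineMap.lineMap_apply_one,
    AffineMap.lineMap_apply_zero, sub_zero, div_one] at hslope
  linarith

variable {E : Type*} [NormedAddCommGroup E] [InnerProductSpace ℝ E] {f : E → ℝ} {L : ℝ}

theorem add_inner_le_of_convexOn {g x : E} (hf : ConvexOn ℝ Set.univ f)
    (hg : HasFDerivAt f (innerSL ℝ g) x) (y : E) : f x + ⟪g, y - x⟫ ≤ f y :=
  add_fderiv_apply_sub_le_of_convexOn hf (Set.mem_univ x) (Set.mem_univ y) hg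

theorem le_add_inner_add_norm_sq_of_convexOn {g x : E}
    (hf : ConvexOn ℝ Set.univ fun z => L / 2 * ‖z‖ ^ 2 - f z)
    (hg : HasFDerivAt f (innerSL ℝ g) x) (y : E) :
    f y ≤ f x + ⟪g, y - x⟫ + L / 2 * ‖y - x‖ ^ 2 := by
  have hderiv : HasFDerivAt (fun z => L / 2 * ‖z‖ ^ 2 - f z) (innerSL ℝ (L • x - g)) x := by
    convert! ((hasStrictFDerivAt_norm_sq x).hasFDerivAt.const_mul (L / 2)).sub hg using 1
    ext v
    simp only [map_sub, map_smul, sub_apply, smul_apply, coe_innerSL_apply, smul_eq_mul,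
      nsmul_eq_mul, Nat.cast_ofNat, sub_left_inj]
    ring
  have h := add_inner_le_of_convexOn hf hderiv y
  simp only [inner_sub_left, inner_sub_right, real_inner_smul_left,
    real_inner_self_eq_norm_sq] at h
  rw [norm_sub_sq_real, inner_sub_right, real_inner_comm x y]
  linarith

theorem add_norm_sq_le_of_forall_le (hL : 0 < L) {c : ℝ} {g x : E}
    (hupper : ∀ z, f z ≤ f x + ⟪g, z - x⟫ + L / 2 * ‖z - x‖ ^ 2) (hc : ∀ z, c ≤ f z) :
    c + 1 / (2 * L) * ‖g‖ ^ 2 ≤ f x := by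
  have hstep : f (x - L⁻¹ • g) ≤ f x - 1 / (2 * L) * ‖g‖ ^ 2 :=
    calc f (x - L⁻¹ • g) ≤ f x + ⟪g, -(L⁻¹ • g)⟫ + L / 2 * ‖-(L⁻¹ • g)‖ ^ 2 := by
          simpa using hupper (x - L⁻¹ • g)
      _ = f x - 1 / (2 * L) * ‖g‖ ^ 2 := by
          rw [inner_neg_right, real_inner_smul_right, real_inner_self_eq_norm_sq, norm_neg,
            norm_smul_sq]
          field_simp
          ring
  linarith [hc (x - L⁻¹ • g)]

/- Tilting `f` by the linear function `⟪h, ·⟫` makes `y` a minimizer without changing the curvature,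
so the gradient-step bound applies to the tilted function. -/
theorem add_inner_add_norm_sub_sq_le (hL : 0 < L) {g h x y : E}
    (hupper : ∀ z, f z ≤ f x + ⟪g, z - x⟫ + L / 2 * ‖z - x‖ ^ 2)
    (hlower : ∀ z, f y + ⟪h, z - y⟫ ≤ f z) :
    f y + ⟪h, x - y⟫ + 1 / (2 * L) * ‖g - h‖ ^ 2 ≤ f x := by
  have htilt := add_norm_sq_le_of_forall_le (f := fun z => f z - ⟪h, z - y⟫) (g := g - h)
    (x := x) (c := f y) hL
    (fun z => by
      have hsplit : ⟪h, z - y⟫ = ⟪h, z - x⟫ + ⟪h, x - y⟫ := by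
        rw [← inner_add_right, sub_add_sub_cancel]
      rw [inner_sub_left]
      linarith [hupper z])
    (fun z => le_sub_iff_add_le.2 (hlower z))
  linarith

end SmoothConvex

theorem zpow_neg_two_mul_natCast (x : ℝ) (n : ℕ) : x ^ (-(2 * (n : ℤ))) = (x ^ 2)⁻¹ ^ n := by
  rw [zpow_neg, zpow_mul, zpow_natCast, zpow_ofNat, inv_pow]

theorem natCast_mul_pow_sub_one_le {b : ℝ} (hb : 0 < b) {k n : ℕ} (hkn : k ≤ n) :
    n * (b ^ k - 1) ≤ k * (b ^ n - 1) := by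
  rcases n.eq_zero_or_pos with rfl | hn
  · simp [Nat.le_zero.1 hkn]
  have hn' : (0 : ℝ) < n := by exact_mod_cast hn
  have hkn' : (k : ℝ) / n ≤ 1 := div_le_one_of_le₀ (by exact_mod_cast hkn) hn'.le
  have hconv := (convexOn_rpow_left hb).2 (Set.mem_univ 0) (Set.mem_univ (n : ℝ))
    (sub_nonneg.2 hkn') (by positivity) (sub_add_cancel 1 ((k : ℝ) / n))
  simp only [smul_eq_mul, mul_zero, zero_add, div_mul_cancel₀ _ hn'.ne', Real.rpow_natCast,
    Real.rpow_zero, mul_one] at hconv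
  calc n * (b ^ k - 1) ≤ n * (1 - k / n + k / n * b ^ n - 1) := by gcongr
    _ = k * (b ^ n - 1) := by field_simp; ring

/-- The weight of the interpolation inequality between the iterates `n - 1` and `n + 1`. Its
numerator is the excess of the linear rate `1 + 2nγ` over the geometric rate `(1 - γ) ^ (-2n)`. -/
noncomputable def lyapunovWeight (γ : ℝ) (n : ℕ) : ℝ :=
  (1 + 2 * n * γ - ((1 - γ) ^ 2)⁻¹ ^ n) / (2 * γ ^ 2)

theorem lyapunovWeight_zero (γ : ℝ) : lyapunovWeight γ 0 = 0 := by
  simp [lyapunovWeight]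

theorem lyapunovWeight_eq_zero_iff {γ : ℝ} (hγ : γ ≠ 0) {n : ℕ} :
    lyapunovWeight γ n = 0 ↔ ((1 - γ) ^ 2)⁻¹ ^ n = 1 + 2 * n * γ := by
  rw [lyapunovWeight, div_eq_zero_iff, or_iff_left (by positivity), sub_eq_zero, eq_comm]

theorem lyapunovWeight_nonneg {γ : ℝ} (hγ₀ : γ ≠ 0) (hγ₁ : γ ≠ 1) {k n : ℕ}
    (hn : lyapunovWeight γ n = 0) (hkn : k ≤ n) : 0 ≤ lyapunovWeight γ k := by
  rcases n.eq_zero_or_pos with rfl | hpos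
  · rw [Nat.le_zero.1 hkn, hn]
  rw [lyapunovWeight_eq_zero_iff hγ₀] at hn
  have hb : 0 < ((1 - γ) ^ 2)⁻¹ := inv_pos.2 (sq_pos_of_ne_zero (sub_ne_zero.2 hγ₁.symm))
  have hsecant : (n : ℝ) * (((1 - γ) ^ 2)⁻¹ ^ k - 1) ≤ n * (2 * k * γ) :=
    calc (n : ℝ) * (((1 - γ) ^ 2)⁻¹ ^ k - 1) ≤ k * (((1 - γ) ^ 2)⁻¹ ^ n - 1) :=
          natCast_mul_pow_sub_one_le hb hkn
      _ = n * (2 * k * γ) := by rw [hn]; ring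
  have hle := le_of_mul_le_mul_left hsecant (by exact_mod_cast hpos)
  exact div_nonneg (by linarith) (by positivity)

theorem lyapunovWeight_le {γ : ℝ} (hγ₀ : γ ≠ 0) (hγ₁ : γ ≠ 1) (n : ℕ) :
    lyapunovWeight γ n ≤ n / 2 := by
  have hsq : 0 < (1 - γ) ^ 2 := sq_pos_of_ne_zero (sub_ne_zero.2 hγ₁.symm)
  have hinv : 2 - (1 - γ) ^ 2 ≤ ((1 - γ) ^ 2)⁻¹ := by
    rw [← one_div, le_div_iff₀ hsq]
    linarith [sq_nonneg ((1 - γ) ^ 2 - 1)]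
  have hbernoulli : 1 + (n : ℝ) * (((1 - γ) ^ 2)⁻¹ - 1) ≤ ((1 - γ) ^ 2)⁻¹ ^ n :=
    one_add_mul_sub_le_pow (by linarith [inv_pos.2 hsq]) n
  have hmul : (n : ℝ) * (2 - (1 - γ) ^ 2) ≤ n * ((1 - γ) ^ 2)⁻¹ := by gcongr
  rw [lyapunovWeight, div_le_iff₀ (by positivity)]
  linarith

theorem lyapunovWeight_succ {γ : ℝ} (hγ₀ : γ ≠ 0) (hγ₁ : γ ≠ 1) (n : ℕ) :
    2 * γ * (lyapunovWeight γ n - (γ - 1) ^ 2 * lyapunovWeight γ (n + 1)) =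
      (2 - γ) * (1 + 2 * n * γ) - 2 * (γ - 1) ^ 2 := by
  have hsub : 1 - γ ≠ 0 := sub_ne_zero.2 hγ₁.symm
  simp only [lyapunovWeight, pow_succ (((1 - γ) ^ 2)⁻¹), Nat.cast_succ]
  field_simp
  ring

theorem lt_two_of_lyapunovWeight_eq_zero {γ : ℝ} (hγ : 0 < γ) {n : ℕ} (hn : n ≠ 0)
    (hw : lyapunovWeight γ n = 0) : γ < 2 := by
  by_contra! h
  rw [lyapunovWeight_eq_zero_iff (by positivity)] at hw
  have hle : ((1 - γ) ^ 2)⁻¹ ^ n ≤ 1 :=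
    pow_le_one₀ (by positivity) (inv_le_one_of_one_le₀ (by nlinarith))
  have hpos : 0 < 2 * n * γ := by positivity
  linarith

section GradientDescent

variable {E : Type*} [NormedAddCommGroup E] [InnerProductSpace ℝ E]

/-- The slack in the interpolation inequality of `1`-smooth convex functions for the values `φ` and
the gradients `g` at the points `x i` and `x j`. -/
noncomputable def interpolationGap (φ : ℕ → ℝ) (x g : ℕ → E) (i j : ℕ) : ℝ :=
  φ i - φ j - ⟪g j, x i - x j⟫ - ‖g i - g j‖ ^ 2 / 2

/-- The weight of the interpolation inequality `interpolationGap φ x g n (n + 1) ≥ 0` in the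
decrease of the Lyapunov function from `n` to `n + 1`. -/
noncomputable def forwardWeight (γ : ℝ) (n : ℕ) : ℝ :=
  1 / 2 + γ * (n + 1) - lyapunovWeight γ n
    - (1 + (γ - 1) * γ) * lyapunovWeight γ (n + 1)

/-- The weight of the reversed interpolation inequality `interpolationGap φ x g (n + 1) n ≥ 0` in
the decrease of the Lyapunov function from `n` to `n + 1`. -/
noncomputable def backwardWeight (γ : ℝ) (n : ℕ) : ℝ :=
  γ * (n + 1) - 1 / 2 - (γ - 1) * lyapunovWeight γ n
    - (γ - 1) * (1 + γ) * lyapunovWeight γ (n + 1)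

theorem forwardWeight_nonneg {γ : ℝ} (hγ : 1 < γ) (hγ₂ : γ ≤ 2) (n : ℕ) :
    0 ≤ forwardWeight γ n := by
  have hn := lyapunovWeight_le (by positivity) hγ.ne' n
  have hsucc := mul_le_mul_of_nonneg_left (lyapunovWeight_le (by positivity) hγ.ne' (n + 1))
    (show 0 ≤ 1 + (γ - 1) * γ by nlinarith)
  -- Twice the weight, with both Lyapunov weights replaced by their bounds `n / 2`, `(n + 1) / 2`.
  have hpoly : 0 ≤ (n + 1) * ((γ - 1) * (2 - γ)) + 2 :=
    add_nonneg (mul_nonneg (by positivity) (mul_nonneg (by linarith) (by linarith))) two_pos.le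
  rw [forwardWeight]
  push_cast at hsucc
  linarith

theorem backwardWeight_nonneg {γ : ℝ} (hγ : 1 < γ) (hγ₂ : γ ≤ 2) (n : ℕ) :
    0 ≤ backwardWeight γ n := by
  have hn := mul_le_mul_of_nonneg_left (lyapunovWeight_le (by positivity) hγ.ne' n)
    (sub_nonneg.2 hγ.le)
  have hsucc := mul_le_mul_of_nonneg_left (lyapunovWeight_le (by positivity) hγ.ne' (n + 1))
    (mul_nonneg (sub_nonneg.2 hγ.le) (by positivity : 0 ≤ 1 + γ))
  have hpoly : 0 ≤ (2 - γ) * (n * (1 + γ) + γ) := mul_nonneg (by linarith) (by positivity)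
  rw [backwardWeight]
  push_cast at hsucc
  linarith

/-- The Lyapunov function of gradient descent with constant stepsize `γ`. The truncation of `n - 1`
at `n = 0` is harmless, because the weight in front vanishes there. -/
noncomputable def lyapunov (γ : ℝ) (φ : ℕ → ℝ) (x g : ℕ → E) (n : ℕ) : ℝ :=
  φ n + n * γ * ‖g n‖ ^ 2 + lyapunovWeight γ n *
    (interpolationGap φ x g (n - 1) n + (γ - 1) * interpolationGap φ x g n (n - 1)
      + (γ - 1) * γ * ⟪g n, g (n - 1) - g n⟫)

theorem lyapunov_sub_lyapunov_succ {γ : ℝ} (hγ₀ : γ ≠ 0) (hγ₁ : γ ≠ 1) (φ : ℕ → ℝ)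
    {x g : ℕ → E} {n : ℕ} (hx : ∀ i ≤ n, x (i + 1) = x i - γ • g i) :
    lyapunov γ φ x g n - lyapunov γ φ x g (n + 1) =
      forwardWeight γ n * interpolationGap φ x g n (n + 1)
        + backwardWeight γ n * interpolationGap φ x g (n + 1) n
        + lyapunovWeight γ n * (interpolationGap φ x g (n - 1) (n + 1)
          + (γ - 1) * interpolationGap φ x g (n + 1) (n - 1)) := by
  -- The two sides differ by a multiple of `⟪g n, g (n + 1) - g n⟫` whose coefficient vanishes by
  -- the recursion `hw` of the weights.
  have hw := lyapunovWeight_succ hγ₀ hγ₁ n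
  cases n with
  | zero =>
    simp only [lyapunov, forwardWeight, backwardWeight, interpolationGap, lyapunovWeight_zero,
      Nat.add_sub_cancel, hx 0 le_rfl, norm_sub_sq_real, inner_sub_right, real_inner_smul_right,
      real_inner_self_eq_norm_sq, real_inner_comm (g 0) (g (0 + 1))] at hw ⊢
    push_cast at hw ⊢
    linear_combination (⟪g 0, g 1⟫ - ‖g 0‖ ^ 2) / 2 * hw
  | succ m =>
    simp only [lyapunov, forwardWeight, backwardWeight, interpolationGap, Nat.add_sub_cancel,
      hx (m + 1) le_rfl, hx m (by lia), norm_sub_sq_real, inner_sub_right, real_inner_smul_right,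
      real_inner_self_eq_norm_sq, real_inner_comm (g m) (g (m + 1)),
      real_inner_comm (g m) (g (m + 1 + 1)), real_inner_comm (g (m + 1)) (g (m + 1 + 1))]
    push_cast at hw ⊢
    linear_combination (⟪g (m + 1), g (m + 2)⟫ - ‖g (m + 1)‖ ^ 2) / 2 * hw

theorem lyapunov_succ_le {N n : ℕ} (hn : n < N) {γ : ℝ} (hγ : 1 < γ)
    (hweight : lyapunovWeight γ N = 0) {φ : ℕ → ℝ} {x g : ℕ → E}
    (hgap : ∀ i ≤ N, ∀ j ≤ N, 0 ≤ interpolationGap φ x g i j)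
    (hx : ∀ i < N, x (i + 1) = x i - γ • g i) :
    lyapunov γ φ x g (n + 1) ≤ lyapunov γ φ x g n := by
  have hγ₀ : 0 < γ := by positivity
  have hγ₂ : γ < 2 := lt_two_of_lyapunovWeight_eq_zero hγ₀ (Nat.ne_zero_of_lt hn) hweight
  have hforward := forwardWeight_nonneg hγ hγ₂.le n
  have hbackward := backwardWeight_nonneg hγ hγ₂.le n
  have hskip := lyapunovWeight_nonneg hγ₀.ne' hγ.ne' hweight hn.le
  have hgap_forward := hgap n (by lia) (n + 1) (by lia)
  have hgap_backward := hgap (n + 1) (by lia) n (by lia)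
  have hgap_skip_forward := hgap (n - 1) (by lia) (n + 1) (by lia)
  have hgap_skip_backward := hgap (n + 1) (by lia) (n - 1) (by lia)
  rw [← sub_nonneg, lyapunov_sub_lyapunov_succ hγ₀.ne' hγ.ne' φ fun i hi => hx i (by lia)]
  positivity

theorem mul_norm_sq_le_of_interpolationGap_nonneg {N : ℕ} {γ : ℝ} (hγ : 1 < γ)
    (hweight : lyapunovWeight γ N = 0) {φ : ℕ → ℝ} {x g : ℕ → E}
    (hgap : ∀ i ≤ N, ∀ j ≤ N, 0 ≤ interpolationGap φ x g i j)
    (hx : ∀ i < N, x (i + 1) = x i - γ • g i) :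
    N * γ * ‖g N‖ ^ 2 ≤ φ 0 - φ N := by
  have hle : ∀ n ≤ N, lyapunov γ φ x g n ≤ lyapunov γ φ x g 0 := by
    intro n
    induction n with
    | zero => exact fun _ => le_rfl
    | succ n ih =>
      exact fun hn => (lyapunov_succ_le hn hγ hweight hgap hx).trans (ih (Nat.le_of_succ_le hn))
  have hN := hle N le_rfl
  simp only [lyapunov, hweight, lyapunovWeight_zero, Nat.cast_zero, zero_mul, add_zero] at hN
  linarith

variable {f : E → ℝ} {L : ℝ}

theorem interpolationGap_nonneg (hL : 0 < L) {x g : ℕ → E} {i j : ℕ}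
    (hconv : ConvexOn ℝ Set.univ f)
    (hsmooth : ConvexOn ℝ Set.univ fun z => L / 2 * ‖z‖ ^ 2 - f z)
    (hi : HasFDerivAt f (innerSL ℝ (g i)) (x i)) (hj : HasFDerivAt f (innerSL ℝ (g j)) (x j)) :
    0 ≤ interpolationGap (fun n => f (x n) / L) x (fun n => L⁻¹ • g n) i j := by
  have h := add_inner_add_norm_sub_sq_le hL (le_add_inner_add_norm_sq_of_convexOn hsmooth hi)
    (add_inner_le_of_convexOn hconv hj)
  have hscale : interpolationGap (fun n => f (x n) / L) x (fun n => L⁻¹ • g n) i j =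
      (f (x i) - (f (x j) + ⟪g j, x i - x j⟫ + 1 / (2 * L) * ‖g i - g j‖ ^ 2)) / L := by
    rw [interpolationGap, real_inner_smul_left, ← smul_sub, norm_smul_sq]
    field_simp
    ring
  rw [hscale]
  exact div_nonneg (sub_nonneg.2 h) hL.le

theorem gradientDescent_norm_gradient_sq_le {N : ℕ} {γ : ℝ} (hγ : 1 < γ)
    (hrate : 2 * N * γ = -1 + (1 - γ) ^ (-(2 * (N : ℤ)))) (hL : 0 < L)
    (hconv : ConvexOn ℝ Set.univ f)
    (hsmooth : ConvexOn ℝ Set.univ fun z => L / 2 * ‖z‖ ^ 2 - f z)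
    (hbdd : BddBelow (Set.range f)) {x g : ℕ → E}
    (hg : ∀ i ≤ N, HasFDerivAt f (innerSL ℝ (g i)) (x i))
    (hx : ∀ i < N, x (i + 1) = x i - (γ / L) • g i) :
    1 / (2 * L) * ‖g N‖ ^ 2 ≤ (f (x 0) - ⨅ y, f y) / (1 + 2 * N * γ) := by
  have hweight : lyapunovWeight γ N = 0 := by
    rw [lyapunovWeight_eq_zero_iff (by positivity), ← zpow_neg_two_mul_natCast]
    linarith
  have hdecrease : N * γ * ‖L⁻¹ • g N‖ ^ 2 ≤ f (x 0) / L - f (x N) / L :=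
    mul_norm_sq_le_of_interpolationGap_nonneg (φ := fun i => f (x i) / L) hγ hweight
      (fun i hi j hj => interpolationGap_nonneg hL hconv hsmooth (hg i hi) (hg j hj))
      (fun i hi => by rw [hx i hi, smul_smul, div_eq_mul_inv])
  have hlast : (⨅ y, f y) + 1 / (2 * L) * ‖g N‖ ^ 2 ≤ f (x N) :=
    add_norm_sq_le_of_forall_le hL (le_add_inner_add_norm_sq_of_convexOn hsmooth (hg N le_rfl))
      (ciInf_le hbdd)
  rw [norm_smul_sq, ← sub_div, le_div_iff₀ hL] at hdecrease
  rw [le_div_iff₀ (by positivity)]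
  calc 1 / (2 * L) * ‖g N‖ ^ 2 * (1 + 2 * N * γ)
      = 1 / (2 * L) * ‖g N‖ ^ 2 + N * γ * (L⁻¹ ^ 2 * ‖g N‖ ^ 2) * L := by field_simp
    _ ≤ f (x 0) - ⨅ y, f y := by linarith

end GradientDescent

theorem inv_one_sub_sq_pow_le_of_le {s t : ℝ} (hs : 1 < s) (hst : s ≤ t) (n : ℕ) :
    ((1 - t) ^ 2)⁻¹ ^ n ≤ ((1 - s) ^ 2)⁻¹ ^ n := by
  have hs' : 0 < (1 - s) ^ 2 := sq_pos_of_neg (by linarith)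
  have hsq : (1 - s) ^ 2 ≤ (1 - t) ^ 2 := by nlinarith
  gcongr

theorem one_add_mul_min_le {N : ℕ} {γ t : ℝ} (hγ : 1 < γ)
    (hrate : 2 * N * γ = -1 + (1 - γ) ^ (-(2 * (N : ℤ)))) (ht : 0 < t) :
    1 + t * min (2 * (N : ℝ)) ((-1 + (1 - t) ^ (-(2 * (N : ℤ)))) / t) ≤ 1 + 2 * N * γ := by
  rw [mul_min_of_nonneg _ _ ht.le, mul_div_cancel₀ _ ht.ne', add_le_add_iff_left]
  rcases le_total t γ with htγ | hγt
  · calc min (t * (2 * N)) _ ≤ t * (2 * N) := min_le_left _ _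
      _ ≤ γ * (2 * N) := by gcongr
      _ = 2 * N * γ := mul_comm _ _
  · calc min _ (-1 + (1 - t) ^ (-(2 * (N : ℤ)))) ≤ -1 + (1 - t) ^ (-(2 * (N : ℤ))) :=
          min_le_right _ _
      _ ≤ -1 + (1 - γ) ^ (-(2 * (N : ℤ))) := by
          simpa only [zpow_neg_two_mul_natCast, add_le_add_iff_left] using
            inv_one_sub_sq_pow_le_of_le hγ hγt N
      _ = 2 * N * γ := hrate.symm

theorem gd_convex_optimal_constant_stepsize_general (N : ℕ) (γbar : ℝ) (hγbar : 1 < γbar)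
    (heq : 2 * N * γbar = -1 + (1 - γbar) ^ (-(2 * (N : ℤ)))) :
    (∀ (E : Type*) [NormedAddCommGroup E] [InnerProductSpace ℝ E] (L : ℝ), 0 < L →
      ∀ (f : E → ℝ), ConvexOn ℝ Set.univ f →
      ConvexOn ℝ Set.univ (fun z => L / 2 * ‖z‖ ^ 2 - f z) →
      BddBelow (Set.range f) →
      ∀ (x g : ℕ → E), (∀ i ≤ N, HasFDerivAt f (innerSL ℝ (g i)) (x i)) →
      (∀ i < N, x (i + 1) = x i - (γbar / L) • g i) →
      1 / (2 * L) * ‖g N‖ ^ 2 ≤ (f (x 0) - ⨅ y, f y) / (1 + 2 * N * γbar)) ∧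
    (∀ t : ℝ, 0 < t → t ≠ 1 →
      1 + t * min (2 * (N : ℝ)) ((-1 + (1 - t) ^ (-(2 * (N : ℤ)))) / t) ≤
        1 + 2 * N * γbar) :=
  ⟨fun _ _ _ _ hL _ hconv hsmooth hbdd _ _ hg hx =>
    gradientDescent_norm_gradient_sq_le hγbar heq hL hconv hsmooth hbdd hg hx,
    fun _ ht _ => one_add_mul_min_le hγbar heq ht⟩

/-- **Optimal constant stepsize for convex functions
(Theorem 6 / `thm:optimal_ct_stepsize_and_rate_convex`).**
Let `γ̄ ∈ (1,2)` satisfy `2Nγ̄ = −1 + (1−γ̄)^{−2N}` (i.e. `γ̄ = γ̄_N(0)`). Then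
(i) for every `f ∈ F_{0,L}` bounded below, `N` steps of gradient descent with constant
stepsize `γ̄/L` give `(1/(2L))‖∇f(x_N)‖² ≤ (f(x₀) − f_*)/(1 + 2Nγ̄)`, and
(ii) `γ̄` maximizes the denominator `1 + t·min{2N, (−1+(1−t)^{−2N})/t}` of the convex
worst-case rate over all normalized constant stepsizes `t ∈ (0,2)`, `t ≠ 1`. -/
theorem gd_convex_optimal_constant_stepsize (N : ℕ) (hN : 1 ≤ N)
    (γbar : ℝ) (hγbar : γbar ∈ Set.Ioo (1 : ℝ) 2)
    (heq : 2 * N * γbar = -1 + (1 - γbar) ^ (-(2 * (N : ℤ)))) :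
    (∀ (E : Type*) [NormedAddCommGroup E] [InnerProductSpace ℝ E] [CompleteSpace E]
      (L : ℝ), 0 < L → ∀ (f : E → ℝ), Differentiable ℝ f →
      ConvexOn ℝ Set.univ f →
      ConvexOn ℝ Set.univ (fun z => L / 2 * ‖z‖ ^ 2 - f z) →
      BddBelow (Set.range f) →
      ∀ (x : ℕ → E), (∀ i < N, x (i + 1) = x i - (γbar / L) • gradient f (x i)) →
      1 / (2 * L) * ‖gradient f (x N)‖ ^ 2 ≤
        (f (x 0) - ⨅ y, f y) / (1 + 2 * N * γbar)) ∧
    (∀ t : ℝ, t ∈ Set.Ioo (0 : ℝ) 2 → t ≠ 1 →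
      1 + t * min (2 * (N : ℝ)) ((-1 + (1 - t) ^ (-(2 * (N : ℤ)))) / t) ≤
        1 + 2 * N * γbar) :=
  have h := gd_convex_optimal_constant_stepsize_general N γbar hγbar.1 heq
  ⟨fun E _ _ _ L hL f hf hconv hsmooth hbdd x hx => h.1 E L hL f hconv hsmooth hbdd x _
    (fun i _ => (hf (x i)).hasGradientAt.hasFDerivAt) hx, fun t ht => h.2 t ht.1⟩
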